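/- arXiv:0912.1329 — 3 statements merged into one kernel-verified Lean document; each statement's English description precedes it below -/
import Mathlib

section
/- For every integer m ≥ 2 and reals T > 0 and R > 0, consider the machine-activation instance with m machines A_1, …, A_{m−1}, B and m jobs, where machine A_i has activation cost 1 and processing time T for every job, and machine B has activation cost R and processing time T/m for every job. Then: (1) every integral schedule (an assignment of all m jobs to a subset S of activated machines such that each machine's total processing time is at most T) must activate machine B, and hence has activation cost at least R; and (2) the LP relaxation with makespan budget T admits a feasible fractional solution of cost at most (m − 1) + R/m, namely y_{A_i} = 1 for all i, y_B = 1/m, x_{A_i, j} = 1/m and x_{B, j} = 1/m for all jobs j. Consequently the integrality gap of the LP with strict makespan budget T is at least R/((m−1) + R/m), which tends to m as R → ∞. -/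
/-- Integrality gap instance. Machines `A_1, …, A_{m-1}` (activation cost 1,
processing time `T` for every job) and machine `B` (activation cost `R`, processing time
`T/m` for every job), with `m` jobs. (1) Every integral schedule with makespan budget `T`
must activate `B`, hence costs at least `R`. (2) The y/x values
`y_{A_i} = 1, y_B = 1/m, x_{i,j} = 1/m` form a feasible fractional LP solution of cost at
most `(m-1) + R/m`. -/
theorem stmt3 (m : ℕ) (hm : 2 ≤ m) (T R : ℝ) (hT : 0 < T) (hR : 0 < R) :
    let B : Fin m := ⟨m - 1, by omega⟩
    let a : Fin m → ℝ := fun i => if i = B then R else 1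
    let p : Fin m → Fin m → ℝ := fun i _ => if i = B then T / m else T
    -- (1): every integral schedule with makespan at most `T` activates `B`
    (∀ (S : Finset (Fin m)) (σ : Fin m → Fin m),
        (∀ j, σ j ∈ S) →
        (∀ i, (∑ j ∈ Finset.univ.filter (fun j => σ j = i), p i j) ≤ T) →
        B ∈ S ∧ R ≤ ∑ i ∈ S, a i) ∧
    -- (2): the LP has a feasible fractional solution of cost at most `(m-1) + R/m`
    (let y : Fin m → ℝ := fun i => if i = B then 1 / m else 1
     let x : Fin m → Fin m → ℝ := fun _ _ => 1 / m
     (∀ i, 0 ≤ y i ∧ y i ≤ 1) ∧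
     (∀ i j, 0 ≤ x i j ∧ x i j ≤ 1) ∧
     (∀ j, ∑ i, x i j = 1) ∧
     (∀ i j, x i j ≤ y i) ∧
     (∀ i, ∑ j, p i j * x i j ≤ T * y i) ∧
     ∑ i, a i * y i ≤ (m - 1 : ℝ) + R / m) := by
  intro B a p
  have hm0 : (0 : ℝ) < m := by
    have : 0 < m := by omega
    exact_mod_cast this
  have hm1 : (1 : ℝ) ≤ m := by
    have : 1 ≤ m := by omega
    exact_mod_cast this
  have hle : (1 : ℝ) / m ≤ 1 := by
    rw [div_le_one hm0]
    exact hm1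
  have hnn : (0 : ℝ) ≤ 1 / m := by positivity
  refine ⟨?_, ?_⟩
  · intro S σ hS hload
    have hB : B ∈ S := by
      by_contra hB
      have hne : ∀ j, σ j ≠ B := fun j h => hB (h ▸ hS j)
      have hinj : Function.Injective σ := by
        intro j k hjk
        by_contra hjk'
        have h1 := hload (σ j)
        simp only [p, if_neg (hne j), Finset.sum_const, nsmul_eq_mul] at h1
        have h2 : 1 < (Finset.univ.filter (fun l => σ l = σ j)).card :=
          Finset.one_lt_card.mpr ⟨j, by simp, k, by simp [hjk], hjk'⟩
        have h3 : (2 : ℝ) ≤ ((Finset.univ.filter (fun l => σ l = σ j)).card : ℝ) := by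
          exact_mod_cast h2
        nlinarith
      obtain ⟨j, hj⟩ := (Finite.injective_iff_surjective.mp hinj) B
      exact hne j hj
    refine ⟨hB, ?_⟩
    have h := Finset.single_le_sum (f := a) (s := S) (fun i _ => by
      simp only [a]
      split_ifs
      · exact hR.le
      · exact zero_le_one) hB
    simpa [a] using h
  · intro y x
    refine ⟨?_, ?_, ?_, ?_, ?_, ?_⟩
    · intro i
      simp only [y]
      split_ifs
      · exact ⟨hnn, hle⟩
      · exact ⟨zero_le_one, le_refl _⟩
    · intro i j
      exact ⟨hnn, hle⟩
    · intro j
      simp only [x, Finset.sum_const, Finset.card_univ, Fintype.card_fin, nsmul_eq_mul]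
      field_simp
    · intro i j
      simp only [x, y]
      split_ifs
      · exact le_refl _
      · exact hle
    · intro i
      simp only [p, x, y, Finset.sum_const, Finset.card_univ, Fintype.card_fin, nsmul_eq_mul]
      apply le_of_eq
      split_ifs <;> field_simp
    · have h : ∀ i, a i * y i = 1 + (if i = B then R / m - 1 else 0) := by
        intro i
        simp only [a, y]
        split_ifs <;> ring
      apply le_of_eq
      rw [Finset.sum_congr rfl (fun i _ => h i), Finset.sum_add_distrib, Finset.sum_ite_eq']
      simp
      ring
end

section
/- Let k ≥ 4 be an even integer, representing an even cycle v_0, v_1, …, v_k = v_0 in a bipartite graph whose machine nodes are the v_t with even t and whose job nodes are the v_t with odd t, and whose edges are e_t = (v_{t−1}, v_t) for t = 1,…,k. Let p_1, …, p_k > 0 be processing times on the edges, let c_1, …, c_k > 0 be caps, and let Z_1, …, Z_k satisfy 0 < Z_t < c_t for all t. Then there exists a nonzero vector μ = (μ_1, …, μ_k) ∈ ℝ^k such that: (i) for every odd t with 1 ≤ t ≤ k−1 (job node v_t), μ_{t+1} = −μ_t; (ii) for every even t with 2 ≤ t ≤ k−2 (machine node v_t), p_t·μ_t + p_{t+1}·μ_{t+1}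 = 0; (iii) 0 ≤ Z_t + μ_t ≤ c_t for every t; (iv) Z_t + μ_t ∈ {0, c_t} for at least one t; and (v) p_1·μ_1 + p_k·μ_k ≤ 0, i.e., the load on the machine node v_0 = v_k does not increase. -/
/-- Direction along the cycle. -/
noncomputable def cycDir (p : ℕ → ℝ) : ℕ → ℝ
  | 0 => 1
  | t + 1 => if t = 0 then 1 else if Odd t then - cycDir p t
      else -(p t / p (t + 1)) * cycDir p t

lemma cycDir_ne (k : ℕ) (p : ℕ → ℝ) (hp : ∀ t, 1 ≤ t → t ≤ k → 0 < p t) :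
    ∀ t, t ≤ k → cycDir p t ≠ 0 := by
  intro t
  induction t with
  | zero => intro _; simp [cycDir]
  | succ t ih =>
    intro h
    have h1 := ih (by omega)
    rw [cycDir]
    split_ifs with h0 ho
    · exact one_ne_zero
    · exact neg_ne_zero.mpr h1
    · have a := hp t (by omega) (by omega)
      have b := hp (t + 1) (by omega) h
      exact mul_ne_zero (neg_ne_zero.mpr (div_pos a b).ne') h1

lemma cyc_signed (k : ℕ) (p : ℕ → ℝ) (hp : ∀ t, 1 ≤ t → t ≤ k → 0 < p t) :
    ∃ ν : ℕ → ℝ, (∀ t, 1 ≤ t → t ≤ k → ν t ≠ 0) ∧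
      (∀ t, Odd t → 1 ≤ t → t ≤ k - 1 → ν (t + 1) = -ν t) ∧
      (∀ t, Even t → 2 ≤ t → t ≤ k - 2 → p t * ν t + p (t + 1) * ν (t + 1) = 0) ∧
      p 1 * ν 1 + p k * ν k ≤ 0 := by
  have hne := cycDir_ne k p hp
  have ho : ∀ t, Odd t → 1 ≤ t → t ≤ k - 1 → cycDir p (t + 1) = -cycDir p t := by
    intro t h h1 _
    rw [cycDir, if_neg (by omega), if_pos h]
  have he : ∀ t, Even t → 2 ≤ t → t ≤ k - 2 →
      p t * cycDir p t + p (t + 1) * cycDir p (t + 1) = 0 := by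
    intro t h h1 h2
    have b := (hp (t + 1) (by omega) (by omega)).ne'
    rw [cycDir, if_neg (by omega), if_neg (Nat.not_odd_iff_even.mpr h)]
    field_simp
    ring
  rcases le_total (p 1 * cycDir p 1 + p k * cycDir p k) 0 with h | h
  · exact ⟨cycDir p, fun t _ => hne t, ho, he, h⟩
  · refine ⟨fun t => - cycDir p t, fun t _ h2 => neg_ne_zero.mpr (hne t h2), ?_, ?_, ?_⟩
    · intro t a b c
      simp only [ho t a b c]
    · intro t a b c
      have := he t a b c
      simp only
      linarith
    · simp only
      linarith

/-- Cycle-breaking along an even cycle `v_0, v_1, …, v_k = v_0` with edges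
`e_t = (v_{t-1}, v_t)`, `t = 1, …, k`: given processing times `p_t > 0`, caps `c_t > 0`
and values `0 < Z_t < c_t`, there is a nonzero increment vector `μ` preserving each job
node's assignment (odd `t`: `μ_{t+1} = −μ_t`), preserving each internal machine node's
load (even `t`: `p_t μ_t + p_{t+1} μ_{t+1} = 0`), keeping all values in `[0, c_t]`,
rounding at least one value to a boundary, and not increasing the load of the closing
machine node (`p_1 μ_1 + p_k μ_k ≤ 0`). -/
theorem stmt6 (k : ℕ) (hk : 4 ≤ k) (hkeven : Even k)
    (p c Z : ℕ → ℝ)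
    (hp : ∀ t, 1 ≤ t → t ≤ k → 0 < p t)
    (hc : ∀ t, 1 ≤ t → t ≤ k → 0 < c t)
    (hZ : ∀ t, 1 ≤ t → t ≤ k → 0 < Z t ∧ Z t < c t) :
    ∃ μ : ℕ → ℝ,
      (∃ t, 1 ≤ t ∧ t ≤ k ∧ μ t ≠ 0) ∧
      (∀ t, Odd t → 1 ≤ t → t ≤ k - 1 → μ (t + 1) = -μ t) ∧
      (∀ t, Even t → 2 ≤ t → t ≤ k - 2 → p t * μ t + p (t + 1) * μ (t + 1) = 0) ∧
      (∀ t, 1 ≤ t → t ≤ k → 0 ≤ Z t + μ t ∧ Z t + μ t ≤ c t) ∧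
      (∃ t, 1 ≤ t ∧ t ≤ k ∧ (Z t + μ t = 0 ∨ Z t + μ t = c t)) ∧
      p 1 * μ 1 + p k * μ k ≤ 0 := by
  obtain ⟨ν, hne, ho, he, hl⟩ := cyc_signed k p hp
  obtain ⟨m, hm, hmin⟩ := Finset.exists_min_image (Finset.Icc 1 k)
    (fun t => if 0 < ν t then (c t - Z t) / ν t else Z t / (-ν t)) ⟨1, by simp; omega⟩
  have hstep : ∀ t, 1 ≤ t → t ≤ k →
      0 < (if 0 < ν t then (c t - Z t) / ν t else Z t / (-ν t)) := by
    intro t h1 h2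
    have hz := hZ t h1 h2
    split_ifs with h
    · exact div_pos (by linarith) h
    · have := lt_of_le_of_ne (not_lt.mp h) (hne t h1 h2)
      exact div_pos hz.1 (by linarith)
  rw [Finset.mem_Icc] at hm
  have hpos := hstep m hm.1 hm.2
  obtain ⟨s, hs⟩ : ∃ s, s = (if 0 < ν m then (c m - Z m) / ν m else Z m / (-ν m)) := ⟨_, rfl⟩
  simp only [← hs] at hpos hmin
  refine ⟨fun t => s * ν t, ⟨m, hm.1, hm.2, mul_ne_zero hpos.ne' (hne m hm.1 hm.2)⟩,
    ?_, ?_, ?_, ⟨m, hm.1, hm.2, ?_⟩, ?_⟩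
  · intro t a b d
    simp only [ho t a b d]
    ring
  · intro t a b d
    have := he t a b d
    simp only
    linear_combination s * this
  · intro t h1 h2
    have hz := hZ t h1 h2
    have hle := hmin t (Finset.mem_Icc.mpr ⟨h1, h2⟩)
    simp only
    split_ifs at hle with h
    · rw [le_div_iff₀ h] at hle
      have := mul_pos hpos h
      constructor <;> linarith
    · have hn := lt_of_le_of_ne (not_lt.mp h) (hne t h1 h2)
      rw [le_div_iff₀ (by linarith)] at hle
      have := mul_neg_of_pos_of_neg hpos hn
      constructor <;> linarith
  · have hn := hne m hm.1 hm.2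
    split_ifs at hs with h
    · right
      simp only [hs]
      field_simp
      ring
    · left
      simp only [hs]
      field_simp
      ring
  · have := mul_nonneg hpos.le (neg_nonneg.mpr hl)
    simp only
    linarith
end

section
/- Let J be a finite set of n jobs with profits π_j ≥ 0 and M a finite set of m machines, with processing times p_{i,j} ≥ 0 and assignment costs c_{i,j} ≥ 0, and let T > 0, C ≥ 0, Π ≥ 0. Suppose there exist reals x_{i,j} ∈ [0,1] and y_j ∈ [0,1] satisfying: ∑_{j∈J} π_j·y_j ≥ Π; ∑_{i∈M} x_{i,j} = y_j for every job j; ∑_{i,j} c_{i,j}·x_{i,j} ≤ C; ∑_{j∈J} p_{i,j}·x_{i,j} ≤ T for every machine i; and x_{i,j} = 0 whenever p_{i,j} > T. Then there exists a finitely supported probability distribution over partial assignments σ (functions from subsets S ⊆ J of the jobs to M) such that: (i) the expected assignment cost E[∑_{j ∈ dom σ} c_{σ(j),j}] is at most C; (ii) the expected profit E[∑_{j ∈ dom σ} π_j] is at least Π; and (iii) every partial assignment σ in the support has makespan at most 2T, i.e., ∑_{j ∈ dom σ : σ(j) = i} p_{i,j} ≤ 2T for every machine i. -/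
/-- Clamp of `t - s` to the unit interval. -/
noncomputable def slotF (s : ℕ) (t : ℝ) : ℝ := min (max (t - s) 0) 1

lemma slotF_mono (s : ℕ) {a b : ℝ} (h : a ≤ b) : slotF s a ≤ slotF s b := by
  unfold slotF
  gcongr

lemma slotF_nonneg (s : ℕ) (a : ℝ) : 0 ≤ slotF s a := by
  unfold slotF
  exact le_min (le_max_right _ _) zero_le_one

lemma slotF_le_one (s : ℕ) (a : ℝ) : slotF s a ≤ 1 := min_le_right _ _

lemma slotF_of_le (s : ℕ) {a : ℝ} (h : a ≤ s) : slotF s a = 0 := by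
  unfold slotF
  rw [max_eq_right (by linarith)]; simp

lemma slotF_of_ge (s : ℕ) {a : ℝ} (h : (s : ℝ) + 1 ≤ a) : slotF s a = 1 := by
  unfold slotF
  rw [min_eq_right]
  exact le_max_of_le_left (by linarith)

lemma slotF_sum (n : ℕ) {t : ℝ} (h : 0 ≤ t) : ∑ s ∈ Finset.range n, slotF s t = min t n := by
  induction n with
  | zero => simp [h]
  | succ n ih =>
    rw [Finset.sum_range_succ, ih]
    push_cast
    rcases le_total t n with h1 | h1
    · rw [slotF_of_le n h1, min_eq_left h1, min_eq_left (by linarith), add_zero]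
    · rcases le_total t (n+1) with h2 | h2
      · rw [min_eq_right h1, min_eq_left h2]
        unfold slotF
        rw [max_eq_left (by linarith), min_eq_left (by linarith)]; ring
      · rw [slotF_of_ge n h2, min_eq_right h1, min_eq_right h2]

/-- Slot construction for one machine, jobs sorted. -/
lemma slots_nat (n : ℕ) (p x : ℕ → ℝ) (hp : ∀ j, 0 ≤ p j)
    (hanti : ∀ j k, j ≤ k → k < n → p k ≤ p j) (T : ℝ) (hT : 0 < T)
    (hx0 : ∀ j, 0 ≤ x j) (hx1 : ∀ j, x j ≤ 1)
    (hload : ∑ j ∈ Finset.range n, p j * x j ≤ T) (hbig : ∀ j, T < p j → x j = 0) :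
    ∃ (A : ℕ → ℕ → ℝ) (B : ℕ → ℝ), (∀ j s, 0 ≤ A j s) ∧
      (∀ j < n, ∑ s ∈ Finset.range (n+1), A j s = x j) ∧
      (∀ s, ∑ j ∈ Finset.range n, A j s ≤ 1) ∧
      (∀ s, 0 ≤ B s) ∧ (∀ j < n, ∀ s, 0 < A j s → p j ≤ B s) ∧
      ∑ s ∈ Finset.range (n+1), B s ≤ 2 * T := by
  set P : ℕ → ℝ := fun k => ∑ j ∈ Finset.range k, x j with hP
  have hPm : Monotone P := by
    apply monotone_nat_of_le_succ
    intro k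
    simp only [hP, Finset.sum_range_succ]
    linarith [hx0 k]
  have hP0 : P 0 = 0 := by simp [hP]
  have hPn0 : ∀ k, 0 ≤ P k := fun k => hP0 ▸ hPm (Nat.zero_le k)
  have hPle : ∀ k, P k ≤ k := by
    intro k
    calc P k ≤ ∑ j ∈ Finset.range k, (1:ℝ) := Finset.sum_le_sum fun j _ => hx1 j
      _ = k := by simp
  have hPs : ∀ k, P (k+1) = P k + x k := fun k => by simp only [hP, Finset.sum_range_succ]
  let A : ℕ → ℕ → ℝ := fun j s => slotF s (P (j+1)) - slotF s (P j)
  have hA0 : ∀ j s, 0 ≤ A j s := fun j s => sub_nonneg.2 (slotF_mono s (hPm (Nat.le_succ j)))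
  have hAs : ∀ m, n ≤ m → ∀ j < n, ∑ s ∈ Finset.range m, A j s = x j := by
    intro m hm j hj
    have e1 : P (j+1) ≤ m := (hPle _).trans (by exact_mod_cast (by omega : j + 1 ≤ m))
    have e2 : P j ≤ m := (hPle _).trans (by exact_mod_cast (by omega : j ≤ m))
    simp only [A]
    rw [Finset.sum_sub_distrib, slotF_sum _ (hPn0 _), slotF_sum _ (hPn0 _), min_eq_left e1,
      min_eq_left e2, hPs]
    ring
  have hAc : ∀ s, ∑ j ∈ Finset.range n, A j s = slotF s (P n) := by
    intro s
    simp only [A]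
    rw [Finset.sum_range_sub (fun j => slotF s (P j)), hP0, slotF_of_le s (Nat.cast_nonneg s),
      sub_zero]
  let B : ℕ → ℝ := fun s => Nat.casesOn s T (fun s => ∑ j ∈ Finset.range n, p j * A j s)
  refine ⟨A, B, hA0, hAs _ (Nat.le_succ n), fun s => (hAc s).trans_le (slotF_le_one _ _), ?_, ?_, ?_⟩
  · rintro (_ | s)
    · exact hT.le
    · exact Finset.sum_nonneg fun j _ => mul_nonneg (hp j) (hA0 j s)
  · rintro j hj (_ | s) h
    · show p j ≤ T
      by_contra hc
      have := hbig j (not_le.1 hc)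
      have h2 := hPs j
      rw [this, add_zero] at h2
      simp [A, h2] at h
    · show p j ≤ ∑ k ∈ Finset.range n, p k * A k s
      have hlt : (s:ℝ) + 1 ≤ P (j+1) := by
        by_contra hc
        have e1 : slotF (s+1) (P (j+1)) = 0 := slotF_of_le _ (by push_cast; linarith)
        have e2 := slotF_nonneg (s+1) (P j)
        simp only [A] at h
        linarith
      have hfull : ∑ k ∈ Finset.range n, A k s = 1 := by
        rw [hAc]; exact slotF_of_ge s (hlt.trans (hPm hj))
      calc p j = ∑ k ∈ Finset.range n, p j * A k s := by rw [← Finset.mul_sum, hfull, mul_one]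
        _ ≤ _ := by
          apply Finset.sum_le_sum
          intro k hk
          rcases le_or_gt k j with hkj | hkj
          · exact mul_le_mul_of_nonneg_right (hanti k j hkj hj) (hA0 k s)
          · have e1 := slotF_of_ge s (hlt.trans (hPm (show j+1 ≤ k from hkj)))
            have e2 := slotF_of_ge s (hlt.trans (hPm (show j+1 ≤ k+1 by omega)))
            have : A k s = 0 := by simp only [A]; rw [e1, e2]; ring
            simp [this]
  · rw [Finset.sum_range_succ']
    show ∑ s ∈ Finset.range n, ∑ j ∈ Finset.range n, p j * A j s + T ≤ _
    rw [Finset.sum_comm]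
    have : ∑ j ∈ Finset.range n, ∑ s ∈ Finset.range n, p j * A j s
        = ∑ j ∈ Finset.range n, p j * x j := by
      apply Finset.sum_congr rfl
      intro j hj
      rw [← Finset.mul_sum, hAs n le_rfl j (Finset.mem_range.1 hj)]
    linarith

/-- Slot construction for one machine. -/
lemma slots_fin {J : Type*} [Fintype J] (p x : J → ℝ) (hp : ∀ j, 0 ≤ p j)
    (T : ℝ) (hT : 0 < T) (hx0 : ∀ j, 0 ≤ x j) (hx1 : ∀ j, x j ≤ 1)
    (hload : ∑ j, p j * x j ≤ T) (hbig : ∀ j, T < p j → x j = 0) :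
    ∃ (A : J → Fin (Fintype.card J + 1) → ℝ) (B : Fin (Fintype.card J + 1) → ℝ),
      (∀ j s, 0 ≤ A j s) ∧ (∀ j, ∑ s, A j s = x j) ∧ (∀ s, ∑ j, A j s ≤ 1) ∧
      (∀ s, 0 ≤ B s) ∧ (∀ j s, 0 < A j s → p j ≤ B s) ∧ ∑ s, B s ≤ 2 * T := by
  classical
  let n := Fintype.card J
  let e0 : Fin n ≃ J := (Fintype.equivFin J).symm
  let e : Fin n ≃ J := (Tuple.sort (fun k => - p (e0 k))).trans e0
  have hmono : Monotone (fun k => - p (e k)) := Tuple.monotone_sort (fun k => - p (e0 k))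
  let p' : ℕ → ℝ := fun k => if h : k < n then p (e ⟨k, h⟩) else 0
  let x' : ℕ → ℝ := fun k => if h : k < n then x (e ⟨k, h⟩) else 0
  have hp' : ∀ k : Fin n, p' k = p (e k) := fun k => by simp [p']
  have hx' : ∀ k : Fin n, x' k = x (e k) := fun k => by simp [x']
  obtain ⟨A, B, h1, h2, h3, h4, h5, h6⟩ := slots_nat n p' x'
    (fun j => by simp only [p']; split_ifs; exacts [hp _, le_rfl])
    (fun j k hjk hk => by
      have := hmono (show (⟨j, hjk.trans_lt hk⟩ : Fin n) ≤ ⟨k, hk⟩ from hjk)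
      simp only [p', hk, hjk.trans_lt hk, dif_pos]
      simp only at this
      linarith) T hT
    (fun j => by simp only [x']; split_ifs; exacts [hx0 _, le_rfl])
    (fun j => by simp only [x']; split_ifs; exacts [hx1 _, zero_le_one])
    (by
      rw [← Fin.sum_univ_eq_sum_range (fun j => p' j * x' j)]
      simp only [hp', hx']
      rw [Equiv.sum_comp e (fun j => p j * x j)]
      exact hload)
    (fun j h => by
      simp only [p', x'] at h ⊢
      split_ifs at h ⊢
      · exact hbig _ h
      · rfl)
  refine ⟨fun j s => A (e.symm j) s, fun s => B s, fun j s => h1 _ _, ?_, ?_, fun s => h4 _, ?_, ?_⟩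
  · intro j
    rw [Fin.sum_univ_eq_sum_range (fun s => A (e.symm j) s), h2 _ (e.symm j).2, hx']
    simp
  · intro s
    rw [Equiv.sum_comp e.symm (fun k : Fin n => A k s), Fin.sum_univ_eq_sum_range (fun k => A k s)]
    exact h3 s
  · intro j s h
    have := h5 _ (e.symm j).2 s h
    rw [hp'] at this
    simpa using this
  · rw [Fin.sum_univ_eq_sum_range B]
    exact h6

/-- Convex decomposition of a fractional bipartite matching into matchings. -/
lemma matching_decomp {J S : Type*} [Fintype J] [Fintype S] [DecidableEq J] [DecidableEq S]
    (A : J → S → ℝ) (h0 : ∀ j s, 0 ≤ A j s) (hr : ∀ j, ∑ s, A j s ≤ 1)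
    (hcol : ∀ s, ∑ j, A j s ≤ 1) :
    ∃ w : Equiv.Perm (J ⊕ S) → ℝ, (∀ τ, 0 ≤ w τ) ∧ ∑ τ, w τ = 1 ∧
      ∀ j s, ∑ τ, w τ * (if τ (Sum.inl j) = Sum.inr s then 1 else 0) = A j s := by
  let D : Matrix (J ⊕ S) (J ⊕ S) ℝ := Matrix.fromBlocks
    (Matrix.diagonal fun j => 1 - ∑ s, A j s) (Matrix.of A) (Matrix.of A).transpose
    (Matrix.diagonal fun s => 1 - ∑ j, A j s)
  have hD : D ∈ doublyStochastic ℝ (J ⊕ S) := by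
    rw [mem_doublyStochastic_iff_sum]
    refine ⟨?_, ?_, ?_⟩
    · rintro (j | s) (j' | s')
      · simp only [D, Matrix.fromBlocks_apply₁₁, Matrix.diagonal_apply]
        split_ifs
        · linarith [hr j]
        · rfl
      · exact h0 _ _
      · exact h0 _ _
      · simp only [D, Matrix.fromBlocks_apply₂₂, Matrix.diagonal_apply]
        split_ifs
        · linarith [hcol s]
        · rfl
    · rintro (j | s) <;> simp [D, Fintype.sum_sum_type, Matrix.diagonal_apply]
    · rintro (j | s) <;> simp [D, Fintype.sum_sum_type, Matrix.diagonal_apply]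
  obtain ⟨w, hw0, hw1, hw⟩ := exists_eq_sum_perm_of_mem_doublyStochastic hD
  refine ⟨w, hw0, hw1, fun j s => ?_⟩
  have := congrFun (congrFun hw (Sum.inl j)) (Sum.inr s)
  rw [Matrix.sum_apply] at this
  simpa [D, Equiv.Perm.permMatrix, PEquiv.toMatrix_apply, Equiv.toPEquiv_apply, eq_comm] using this

/-- Partial GAP. If the LP relaxation (with profits `π`, costs `c`,
processing times `p`, makespan budget `T`, cost budget `C`, profit target `Pt`) is
feasible, then there is a finitely supported probability distribution over partial
assignments (modelled as `J → Option M`) whose expected assignment cost is at most `C`,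
whose expected profit is at least `Pt`, and every partial assignment in the support has
makespan at most `2T`. -/
theorem stmt14 {J M : Type*} [Fintype J] [Fintype M] [DecidableEq M]
    (π : J → ℝ) (hπ : ∀ j, 0 ≤ π j)
    (p : M → J → ℝ) (hp : ∀ i j, 0 ≤ p i j)
    (c : M → J → ℝ) (hc : ∀ i j, 0 ≤ c i j)
    (T C Pt : ℝ) (hT : 0 < T) (hC : 0 ≤ C) (hPt : 0 ≤ Pt)
    (x : M → J → ℝ) (y : J → ℝ)
    (hx01 : ∀ i j, 0 ≤ x i j ∧ x i j ≤ 1)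
    (hy01 : ∀ j, 0 ≤ y j ∧ y j ≤ 1)
    (hprofit : Pt ≤ ∑ j, π j * y j)
    (hassign : ∀ j, ∑ i, x i j = y j)
    (hcost : ∑ i, ∑ j, c i j * x i j ≤ C)
    (hload : ∀ i, ∑ j, p i j * x i j ≤ T)
    (hbig : ∀ i j, T < p i j → x i j = 0) :
    ∃ (N : ℕ) (q : Fin N → ℝ) (σ : Fin N → J → Option M),
      (∀ k, 0 ≤ q k) ∧ (∑ k, q k = 1) ∧
      -- (i) expected assignment cost at most C
      (∑ k, q k * ∑ j, (σ k j).elim 0 (fun i => c i j)) ≤ C ∧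
      -- (ii) expected profit at least Pt
      Pt ≤ (∑ k, q k * ∑ j, (σ k j).elim 0 (fun _ => π j)) ∧
      -- (iii) every assignment in the support has makespan at most 2T
      (∀ k, q k ≠ 0 → ∀ i : M,
        (∑ j ∈ Finset.univ.filter (fun j => σ k j = some i), p i j) ≤ 2 * T) := by
  classical
  choose A B h1 h2 h3 h4 h5 h6 using fun i => slots_fin (p i) (x i) (hp i) T hT
    (fun j => (hx01 i j).1) (fun j => (hx01 i j).2) (hload i) (hbig i)
  obtain ⟨w, hw0, hw1, hw⟩ := matching_decomp
    (fun (j : J) (s : M × Fin (Fintype.card J + 1)) => A s.1 j s.2) (fun j s => h1 _ _ _)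
    (fun j => by
      rw [Fintype.sum_prod_type]
      simp only [h2, hassign]
      exact (hy01 j).2)
    (fun s => h3 s.1 s.2)
  let σ : Equiv.Perm (J ⊕ M × Fin (Fintype.card J + 1)) → J → Option M :=
    fun τ j => Sum.elim (fun _ => none) (fun s => some s.1) (τ (Sum.inl j))
  have key : ∀ g : M → J → ℝ, ∑ τ, w τ * ∑ j, (σ τ j).elim 0 (fun i => g i j)
      = ∑ j, ∑ i, g i j * x i j := by
    intro g
    have e1 : ∀ τ j, (σ τ j).elim 0 (fun i => g i j) = ∑ s : M × Fin (Fintype.card J + 1),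
        g s.1 j * (if τ (Sum.inl j) = Sum.inr s then 1 else 0) := by
      intro τ j
      simp only [σ]
      rcases τ (Sum.inl j) with a | s <;> simp
    simp only [e1, Finset.mul_sum]
    rw [Finset.sum_comm]
    apply Finset.sum_congr rfl
    intro j _
    rw [Finset.sum_comm, Fintype.sum_prod_type]
    apply Finset.sum_congr rfl
    intro i _
    rw [← h2 i j, Finset.mul_sum]
    apply Finset.sum_congr rfl
    intro s _
    rw [← hw j (i, s), Finset.mul_sum]
    apply Finset.sum_congr rfl
    intro τ _
    ring
  let E := (Fintype.equivFin (Equiv.Perm (J ⊕ M × Fin (Fintype.card J + 1)))).symm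
  refine ⟨_, fun k => w (E k), fun k => σ (E k), fun k => hw0 _, ?_, ?_, ?_, ?_⟩
  · rw [Equiv.sum_comp E w, hw1]
  · rw [Equiv.sum_comp E (fun τ => w τ * ∑ j, (σ τ j).elim 0 (fun i => c i j)), key c,
      Finset.sum_comm]
    exact hcost
  · rw [Equiv.sum_comp E (fun τ => w τ * ∑ j, (σ τ j).elim 0 (fun i => π j)),
      key (fun _ j => π j)]
    simp only [← Finset.mul_sum, hassign]
    exact hprofit
  · intro k hk i
    beta_reduce at hk ⊢
    generalize E k = τ at hk ⊢
    have hpos : ∀ j s, τ (Sum.inl j) = Sum.inr s → 0 < A s.1 j s.2 := by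
      intro j s h
      have := Finset.single_le_sum (f := fun τ => w τ * (if τ (Sum.inl j) = Sum.inr s then 1 else 0))
        (fun τ _ => mul_nonneg (hw0 τ) (by split_ifs <;> norm_num)) (Finset.mem_univ τ)
      rw [hw j s] at this
      simp only [h, if_true, mul_one] at this
      exact lt_of_lt_of_le (lt_of_le_of_ne (hw0 τ) (Ne.symm hk)) this
    have hex : ∀ j, σ τ j = some i → ∃ s, τ (Sum.inl j) = Sum.inr (i, s) := by
      intro j h
      simp only [σ] at h
      rcases hh : τ (Sum.inl j) with a | ⟨i', s⟩
      · simp [hh] at h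
      · simp [hh] at h
        exact ⟨s, by rw [h]⟩
    let f : J → Fin (Fintype.card J + 1) := fun j =>
      if h : σ τ j = some i then (hex j h).choose else 0
    have hf : ∀ j, σ τ j = some i → τ (Sum.inl j) = Sum.inr (i, f j) := by
      intro j h
      simp only [f, h, dif_pos]
      exact (hex j h).choose_spec
    calc ∑ j ∈ Finset.univ.filter (fun j => σ τ j = some i), p i j
        ≤ ∑ j ∈ Finset.univ.filter (fun j => σ τ j = some i), B i (f j) := by
          apply Finset.sum_le_sum
          intro j hj
          exact h5 i j _ (hpos j (i, f j) (hf j (Finset.mem_filter.1 hj).2))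
      _ = ∑ s ∈ (Finset.univ.filter (fun j => σ τ j = some i)).image f, B i s := by
          rw [Finset.sum_image]
          intro a ha b hb hab
          have ea := hf a (Finset.mem_filter.1 ha).2
          have eb := hf b (Finset.mem_filter.1 hb).2
          rw [← hab, ← ea] at eb
          exact (Sum.inl_injective (τ.injective eb)).symm
      _ ≤ ∑ s, B i s :=
          Finset.sum_le_sum_of_subset_of_nonneg (Finset.subset_univ _) (fun s _ _ => h4 i s)
      _ ≤ 2 * T := h6 i
end
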